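/- Derivative of the solution branch at r = 0: suppose w : ℝ → ℂ is C¹, L-periodic and satisfies for all t, writing ν = ν(p(v(t))), κ = κ(p(v(t))), κ' = κ'(p(v(t))), the inhomogeneous linear equation w'(t) + κ·ν·⟨iν, w(t)⟩ + (δκ'/(1 - δκ))·iν·⟨iν, w(t)⟩ - (1/δ)·iν·⟨ν, w(t)⟩ = -(δ/2)κ'·ν + (1/2)(1 - δκ)κ·iν, together with the orthogonality condition ∫₀^L ( ⟨w(t), v'(t)⟩ + ⟨w'(t), v''(t)⟩ ) dt = 0 (note v is automatically C²). Then w(t) = -(δ/2)·κ(p(v(t)))·ν(p(v(t))) for all t. -/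

import Mathlib

noncomputable def ipr (z w : ℂ) : ℝ := z.re * w.re + z.im * w.im

/-!
The foot point `q t = p (v t)` runs along `Γ` with unit speed: writing `q t = γ (σ t)`, the solution
is `v t = F (σ t)` with `F = γ - δ ν ∘ γ`, and `F' = (1 - δκ) γ'` does not vanish, so that comparing
`v'` with `F'` shows that `σ` has slope one. The parameter `σ` need not be continuous, so the
comparison is made along ultrafilters: since `σ` may be taken in a compact interval, it converges
along each of them, and the limit is again a parameter of the foot point by uniqueness. Hence
`N = ν ∘ q` satisfies `N' = k · iN` with `k = κ ∘ q`.

In the frame `N, iN` write `w = a N + b iN`. The equation says that `a + (δ/2) k` is a constant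
`c` and that `b / (1 - δk)` has derivative `c / δ`. Periodicity gives `c = 0`, so that
`w = -(δ/2) k N + β v'` for some `β ∈ ℝ`. Finally `⟨-(δ/2) k N, v'⟩` in `H¹` is the integral of the
derivative of `(δ/4) k²`, hence zero, and the orthogonality condition becomes `β ‖v'‖² = 0`.
-/

open Complex Filter Topology

section InnerProduct

lemma ipr_eq_inner (z w : ℂ) : ipr z w = inner ℝ z w := by
  simp only [ipr, Complex.inner, mul_re, conj_re, conj_im]
  ring

lemma hasDerivAt_ipr {f g : ℝ → ℂ} {f' g' : ℂ} {t : ℝ}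
    (hf : HasDerivAt f f' t) (hg : HasDerivAt g g' t) :
    HasDerivAt (fun s => ipr (f s) (g s)) (ipr (f t) g' + ipr f' (g t)) t := by
  simpa only [ipr_eq_inner] using hf.inner ℝ hg

lemma contDiff_ipr {f g : ℝ → ℂ} {n : WithTop ℕ∞} (hf : ContDiff ℝ n f) (hg : ContDiff ℝ n g) :
    ContDiff ℝ n fun t => ipr (f t) (g t) := by
  simpa only [ipr_eq_inner] using hf.inner ℝ hg

lemma ipr_smul_left (c : ℝ) (z w : ℂ) : ipr (c • z) w = c * ipr z w := by
  simp only [ipr_eq_inner, real_inner_smul_left]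

lemma ipr_self_of_norm_eq_one {n : ℂ} (hn : ‖n‖ = 1) : ipr n n = 1 := by
  rw [ipr_eq_inner, real_inner_self_eq_norm_sq, hn, one_pow]

lemma ipr_smul_add_smul {n : ℂ} (hn : ‖n‖ = 1) (a b c d : ℝ) :
    ipr (a • n + b • (I * n)) (c • n + d • (I * n)) = a * c + b * d := by
  have hsq : n.re * n.re + n.im * n.im = 1 := ipr_self_of_norm_eq_one hn
  simp only [ipr, add_re, add_im, smul_re, smul_im, smul_eq_mul, I_mul_re, I_mul_im]
  linear_combination (a * c + b * d) * hsq

lemma ipr_normal_smul_add_smul {n : ℂ} (hn : ‖n‖ = 1) (c d : ℝ) :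
    ipr n (c • n + d • (I * n)) = c := by
  simpa using ipr_smul_add_smul hn 1 0 c d

lemma ipr_tangent_smul_add_smul {n : ℂ} (hn : ‖n‖ = 1) (c d : ℝ) :
    ipr (I * n) (c • n + d • (I * n)) = d := by
  simpa using ipr_smul_add_smul hn 0 1 c d

lemma ipr_smul_add_ipr_smul {n : ℂ} (hn : ‖n‖ = 1) (z : ℂ) :
    ipr n z • n + ipr (I * n) z • (I * n) = z := by
  have hsq : n.re * n.re + n.im * n.im = 1 := ipr_self_of_norm_eq_one hn
  apply Complex.ext <;> simp only [ipr, add_re, add_im, smul_re, smul_im, smul_eq_mul,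
    I_mul_re, I_mul_im]
  · linear_combination z.re * hsq
  · linear_combination z.im * hsq

end InnerProduct

section SobolevProduct

/-- The inner product `⟨f, g⟩` of `H¹(0, L; ℂ)`, with `ℂ` a real inner product space, for `C¹`
functions `f` and `g`; the orthogonality condition reads `h1Inner L w v' = 0`. -/
noncomputable def h1Inner (L : ℝ) (f g : ℝ → ℂ) : ℝ :=
  ∫ t in (0 : ℝ)..L, (ipr (f t) (g t) + ipr (deriv f t) (deriv g t))

lemma continuous_h1Inner_integrand {f g : ℝ → ℂ} (hf : ContDiff ℝ 1 f) (hg : ContDiff ℝ 1 g) :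
    Continuous fun t => ipr (f t) (g t) + ipr (deriv f t) (deriv g t) := by
  have hf' := hf.continuous_deriv le_rfl
  have hg' := hg.continuous_deriv le_rfl
  simp only [ipr_eq_inner]
  exact (hf.continuous.inner hg.continuous).add (hf'.inner hg')

lemma h1Inner_add_smul_left (L β : ℝ) {f g h : ℝ → ℂ} (hf : ContDiff ℝ 1 f)
    (hg : ContDiff ℝ 1 g) (hh : ContDiff ℝ 1 h) :
    h1Inner L (fun t => f t + β • g t) h = h1Inner L f h + β * h1Inner L g h := by
  have hderiv (t : ℝ) : deriv (fun t => f t + β • g t) t = deriv f t + β • deriv g t :=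
    ((hf.differentiable one_ne_zero t).hasDerivAt.add
      ((hg.differentiable one_ne_zero t).hasDerivAt.const_smul β)).deriv
  simp only [h1Inner, hderiv]
  rw [← intervalIntegral.integral_const_mul, ← intervalIntegral.integral_add
    ((continuous_h1Inner_integrand hf hh).intervalIntegrable _ _)
    (((continuous_h1Inner_integrand hg hh).const_mul β).intervalIntegrable _ _)]
  congr 1 with t
  simp only [ipr_eq_inner, inner_add_left, real_inner_smul_left]
  ring

lemma h1Inner_self_pos {L : ℝ} (hL : 0 < L) {f : ℝ → ℂ} (hf : ContDiff ℝ 1 f)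
    (hne : ∀ t, f t ≠ 0) : 0 < h1Inner L f f := by
  refine intervalIntegral.intervalIntegral_pos_of_pos
    ((continuous_h1Inner_integrand hf hf).intervalIntegrable _ _) (fun t => ?_) hL
  simp only [ipr_eq_inner]
  exact add_pos_of_pos_of_nonneg (real_inner_self_pos.2 (hne t)) real_inner_self_nonneg

end SobolevProduct

section ScalarSystem

lemma eq_zero_of_periodic_of_hasDerivAt_const {f : ℝ → ℝ} {c L : ℝ} (hL : L ≠ 0)
    (hper : Function.Periodic f L) (hf : ∀ t, HasDerivAt f c t) : c = 0 := by
  have hlin (t : ℝ) : HasDerivAt (fun s => f s - c * s) 0 t :=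
    ((hf t).sub ((hasDerivAt_id t).const_mul c)).congr_deriv (by ring)
  have hconst : f L - c * L = f 0 - c * 0 :=
    is_const_of_deriv_eq_zero (fun t => (hlin t).differentiableAt) (fun t => (hlin t).deriv) L 0
  rw [hper.eq] at hconst
  exact (mul_eq_zero.1 (by linarith : c * L = 0)).resolve_right hL

lemma frame_coordinates_eq_of_periodic {L δ : ℝ} (hL : L ≠ 0) (hδ : δ ≠ 0) {a b k k' : ℝ → ℝ}
    (hm : ∀ t, 1 - δ * k t ≠ 0) (hk : ∀ t, HasDerivAt k (k' t) t)
    (ha : ∀ t, HasDerivAt a (-(δ / 2) * k' t) t)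
    (hb : ∀ t, HasDerivAt b ((1 / δ - k t) * a t - δ * k' t / (1 - δ * k t) * b t
      + 1 / 2 * (1 - δ * k t) * k t) t)
    (hkper : Function.Periodic k L) (hbper : Function.Periodic b L) :
    (∀ t, a t = -(δ / 2) * k t) ∧ ∃ β, ∀ t, b t = β * (1 - δ * k t) := by
  have hsum (t : ℝ) : HasDerivAt (fun s => a s + δ / 2 * k s) 0 t :=
    ((ha t).add ((hk t).const_mul (δ / 2))).congr_deriv (by ring)
  have ha_const (t : ℝ) : a t + δ / 2 * k t = a 0 + δ / 2 * k 0 :=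
    is_const_of_deriv_eq_zero (fun s => (hsum s).differentiableAt) (fun s => (hsum s).deriv) t 0
  set c := a 0 + δ / 2 * k 0
  have hquot (t : ℝ) : HasDerivAt (fun s => b s / (1 - δ * k s)) (c / δ) t := by
    refine ((hb t).div (((hk t).const_mul δ).const_sub 1) (hm t)).congr_deriv ?_
    rw [eq_sub_of_add_eq (ha_const t)]
    have := hm t
    field_simp
    ring
  have hquot_per : Function.Periodic (fun s => b s / (1 - δ * k s)) L := fun s => by
    simp only [hbper s, hkper s]
  have hc : c / δ = 0 := eq_zero_of_periodic_of_hasDerivAt_const hL hquot_per hquot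
  have hc0 : c = 0 := (div_eq_zero_iff.1 hc).resolve_right hδ
  refine ⟨fun t => by linarith [ha_const t], b 0 / (1 - δ * k 0), fun t => ?_⟩
  rw [← div_eq_iff (hm t)]
  exact is_const_of_deriv_eq_zero (fun s => (hquot s).differentiableAt)
    (fun s => (hquot s).deriv.trans hc) t 0

end ScalarSystem

/-- `N` is a unit normal field along a curve with velocity `iN` and curvature `k`, so that `N, iN`
is the moving frame of the curve. Only the Frenet equation `N' = k · iN` is recorded, the curve
itself does not occur. -/
structure IsMovingFrame (N : ℝ → ℂ) (k : ℝ → ℝ) : Prop where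
  norm_eq_one : ∀ t, ‖N t‖ = 1
  hasDerivAt : ∀ t, HasDerivAt N (k t • (I * N t)) t

namespace IsMovingFrame

variable {N : ℝ → ℂ} {k k' : ℝ → ℝ}

lemma ne_zero (hN : IsMovingFrame N k) (t : ℝ) : N t ≠ 0 :=
  norm_ne_zero_iff.1 (by simp [hN.norm_eq_one t])

lemma hasDerivAt_tangent (hN : IsMovingFrame N k) (t : ℝ) :
    HasDerivAt (fun s => I * N s) (-k t • N t) t := by
  refine ((hN.hasDerivAt t).const_mul I).congr_deriv ?_
  simp only [real_smul, ofReal_neg]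
  linear_combination (k t * N t) * I_mul_I

lemma hasDerivAt_ipr_normal (hN : IsMovingFrame N k) {w : ℝ → ℂ} {A B t : ℝ}
    (hw : HasDerivAt w (A • N t + B • (I * N t)) t) :
    HasDerivAt (fun s => ipr (N s) (w s)) (A + k t * ipr (I * N t) (w t)) t := by
  refine (hasDerivAt_ipr (hN.hasDerivAt t) hw).congr_deriv ?_
  rw [ipr_normal_smul_add_smul (hN.norm_eq_one t), ipr_smul_left]

lemma hasDerivAt_ipr_tangent (hN : IsMovingFrame N k) {w : ℝ → ℂ} {A B t : ℝ}
    (hw : HasDerivAt w (A • N t + B • (I * N t)) t) :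
    HasDerivAt (fun s => ipr (I * N s) (w s)) (B - k t * ipr (N t) (w t)) t := by
  refine (hasDerivAt_ipr (hN.hasDerivAt_tangent t) hw).congr_deriv ?_
  rw [ipr_tangent_smul_add_smul (hN.norm_eq_one t), ipr_smul_left, neg_mul, sub_eq_add_neg]

lemma continuous (hN : IsMovingFrame N k) : Continuous N :=
  continuous_iff_continuousAt.2 fun t => (hN.hasDerivAt t).continuousAt

lemma contDiff (hN : IsMovingFrame N k) (hk : Continuous k) : ContDiff ℝ 1 N := by
  refine contDiff_one_iff_deriv.2 ⟨fun t => (hN.hasDerivAt t).differentiableAt, ?_⟩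
  rw [funext fun t => (hN.hasDerivAt t).deriv]
  exact hk.smul (hN.continuous.const_mul I)

lemma contDiff_curvature (hN : IsMovingFrame N k) {n : WithTop ℕ∞}
    (hNC : ContDiff ℝ (n + 1) N) : ContDiff ℝ n k := by
  have hk : k = fun t => ipr (I * N t) (deriv N t) := funext fun t => by
    simpa [(hN.hasDerivAt t).deriv] using
      (ipr_tangent_smul_add_smul (hN.norm_eq_one t) 0 (k t)).symm
  rw [hk]
  exact contDiff_ipr (contDiff_const.mul (hNC.of_le le_self_add))
    (contDiff_succ_iff_deriv.1 hNC).2.2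

/-- The field `(1 - δk) iN` is the velocity `v'` of the limit solution. -/
lemma h1Inner_normal_velocity (hN : IsMovingFrame N k) {L δ : ℝ}
    (hk : ∀ t, HasDerivAt k (k' t) t) (hk' : Continuous k') (hkper : Function.Periodic k L) :
    h1Inner L (fun t => (-(δ / 2) * k t) • N t) (fun t => (1 - δ * k t) • (I * N t)) = 0 := by
  have hnormal (t : ℝ) : deriv (fun t => (-(δ / 2) * k t) • N t) t
      = (-(δ / 2) * k' t) • N t + (-(δ / 2) * k t ^ 2) • (I * N t) :=
    ((((hk t).const_mul (-(δ / 2))).smul (hN.hasDerivAt t)).congr_deriv (by module)).deriv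
  have hvelocity (t : ℝ) : deriv (fun t => (1 - δ * k t) • (I * N t)) t
      = (-((1 - δ * k t) * k t)) • N t + (-(δ * k' t)) • (I * N t) :=
    (((((hk t).const_mul δ).const_sub 1).smul (hN.hasDerivAt_tangent t)).congr_deriv
      (by module)).deriv
  have hintegrand (t : ℝ) : ipr ((-(δ / 2) * k t) • N t) ((1 - δ * k t) • (I * N t))
      + ipr ((-(δ / 2) * k' t) • N t + (-(δ / 2) * k t ^ 2) • (I * N t))
        ((-((1 - δ * k t) * k t)) • N t + (-(δ * k' t)) • (I * N t)) = δ / 2 * (k t * k' t) := by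
    have horth := ipr_smul_add_smul (hN.norm_eq_one t) (-(δ / 2) * k t) 0 0 (1 - δ * k t)
    simp only [zero_smul, add_zero, zero_add] at horth
    rw [horth, ipr_smul_add_smul (hN.norm_eq_one t)]
    ring
  have hprimitive (t : ℝ) : HasDerivAt (fun s => δ / 4 * k s ^ 2) (δ / 2 * (k t * k' t)) t :=
    (((hk t).pow 2).const_mul (δ / 4)).congr_deriv (by push_cast; ring)
  have hkc : Continuous k := continuous_iff_continuousAt.2 fun t => (hk t).continuousAt
  simp only [h1Inner, hnormal, hvelocity, hintegrand]
  rw [intervalIntegral.integral_eq_sub_of_hasDerivAt (fun t _ => hprimitive t)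
    ((hkc.mul hk').const_mul _ |>.intervalIntegrable _ _), hkper.eq, sub_self]

lemma eq_smul_normal_add_smul_velocity (hN : IsMovingFrame N k) {L δ : ℝ} (hL : L ≠ 0)
    (hδ : δ ≠ 0) (hm : ∀ t, 1 - δ * k t ≠ 0) (hk : ∀ t, HasDerivAt k (k' t) t)
    (hNper : Function.Periodic N L) (hkper : Function.Periodic k L) {w : ℝ → ℂ}
    (hwper : Function.Periodic w L)
    (hw : ∀ t, HasDerivAt w
      ((-(δ / 2) * k' t - k t * ipr (I * N t) (w t)) • N t
        + (1 / 2 * (1 - δ * k t) * k t - δ * k' t / (1 - δ * k t) * ipr (I * N t) (w t)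
          + 1 / δ * ipr (N t) (w t)) • (I * N t)) t) :
    ∃ β : ℝ, ∀ t, w t = (-(δ / 2) * k t) • N t + β • ((1 - δ * k t) • (I * N t)) := by
  obtain ⟨hnormal, β, htangent⟩ := frame_coordinates_eq_of_periodic hL hδ hm hk
    (fun t => (hN.hasDerivAt_ipr_normal (hw t)).congr_deriv (by ring))
    (fun t => (hN.hasDerivAt_ipr_tangent (hw t)).congr_deriv (by ring))
    hkper (fun t => by rw [hNper, hwper])
  refine ⟨β, fun t => ?_⟩
  rw [smul_smul, ← hnormal, ← htangent, ipr_smul_add_ipr_smul (hN.norm_eq_one t)]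

lemma eq_smul_normal_of_h1Inner_eq_zero (hN : IsMovingFrame N k) {L δ β : ℝ} (hL : 0 < L)
    (hm : ∀ t, 1 - δ * k t ≠ 0) (hk : ∀ t, HasDerivAt k (k' t) t) (hk' : Continuous k')
    (hkper : Function.Periodic k L) {w : ℝ → ℂ}
    (hw : ∀ t, w t = (-(δ / 2) * k t) • N t + β • ((1 - δ * k t) • (I * N t)))
    (horth : h1Inner L w (fun t => (1 - δ * k t) • (I * N t)) = 0) (t : ℝ) :
    w t = (-(δ / 2) * k t) • N t := by
  have hkC : ContDiff ℝ 1 k := contDiff_one_iff_deriv.2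
    ⟨fun t => (hk t).differentiableAt, by rwa [funext fun t => (hk t).deriv]⟩
  have hNC : ContDiff ℝ 1 N := hN.contDiff hkC.continuous
  have hnormal : ContDiff ℝ 1 fun t => (-(δ / 2) * k t) • N t := (contDiff_const.mul hkC).smul hNC
  have hvelocity : ContDiff ℝ 1 fun t => (1 - δ * k t) • (I * N t) :=
    (contDiff_const.sub (contDiff_const.mul hkC)).smul (contDiff_const.mul hNC)
  have hpos := h1Inner_self_pos hL hvelocity
    fun t => smul_ne_zero (hm t) (mul_ne_zero I_ne_zero (hN.ne_zero t))
  rw [funext hw, h1Inner_add_smul_left L β hnormal hvelocity hvelocity,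
    hN.h1Inner_normal_velocity hk hk' hkper, zero_add] at horth
  rw [hw, (mul_eq_zero.1 horth).resolve_right hpos.ne', zero_smul, add_zero]

end IsMovingFrame

section FootCurve

variable {M E G : Type*} [PseudoMetricSpace M] [NormedAddCommGroup E] [NormedSpace ℝ E]
  [NormedAddCommGroup G] [NormedSpace ℝ G]

-- Both difference quotients of `F ∘ σ`, in `t` and in `σ t`, are compared after applying a linear
-- functional equal to `1` at `F'`.
lemma tendsto_div_sub_of_hasDerivAt {F : ℝ → E} {σ : ℝ → ℝ} {F' : E} {c s t : ℝ} {l : Filter ℝ}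
    (hl : l ≤ 𝓝[≠] t) (hσ : Tendsto σ l (𝓝 s)) (hF : HasDerivAt F F' s) (hF' : F' ≠ 0)
    {v : ℝ → E} (hv : HasDerivAt v (c • F') t) (hvt : v t = F s) (hvF : ∀ u, v u = F (σ u)) :
    Tendsto (fun u => (σ u - s) / (u - t)) l (𝓝 c) := by
  obtain ⟨A, hA⟩ := SeparatingDual.exists_eq_one (R := ℝ) hF'
  have hslope_v : Tendsto (fun u => A (slope v t u)) l (𝓝 c) := by
    have h := (A.continuous.tendsto _).comp ((hasDerivAt_iff_tendsto_slope.1 hv).mono_left hl)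
    rwa [map_smul, hA, smul_eq_mul, mul_one] at h
  have hslope_F : Tendsto (fun u => A (dslope F s (σ u))) l (𝓝 1) := by
    have h := (continuousAt_dslope_same.2 hF.differentiableAt).tendsto
    rw [dslope_same, hF.deriv] at h
    rw [← hA]
    exact (A.continuous.tendsto _).comp (h.comp hσ)
  have hquot := hslope_v.div hslope_F one_ne_zero
  rw [div_one] at hquot
  refine hquot.congr' ?_
  filter_upwards [hslope_F.eventually_ne one_ne_zero] with u hu
  have hdiff : v u - v t = (σ u - s) • dslope F s (σ u) := by
    rw [sub_smul_dslope, hvt, hvF]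
  simp only [Pi.div_apply, slope_def_module, hdiff, map_smul, smul_eq_mul]
  field_simp

/-- `q t` is the only point at distance `δ` from `v t` on the curve `γ`. If `δ` is the distance of
`v t` to the curve, as in the application, then `q t` is the nearest point. -/
structure IsFootCurve (γ v q : ℝ → M) (δ : ℝ) : Prop where
  mem_range : ∀ t, q t ∈ Set.range γ
  dist_eq_iff : ∀ t s, dist (v t) (γ s) = δ ↔ γ s = q t

namespace IsFootCurve

variable {δ L : ℝ}

lemma exists_parameter {γ v q : ℝ → M} (h : IsFootCurve γ v q δ) (hL : 0 < L)
    (hγ : Continuous γ) (hγper : Function.Periodic γ L) (hv : Continuous v) :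
    ∃ σ : ℝ → ℝ, (∀ t, γ (σ t) = q t) ∧
      ∀ (t : ℝ) (U : Ultrafilter ℝ), ↑U ≤ 𝓝 t → ∃ s, γ s = q t ∧ Tendsto σ U (𝓝 s) := by
  have hparam (t : ℝ) : ∃ s ∈ Set.Icc 0 L, γ s = q t := by
    obtain ⟨r, hr⟩ := h.mem_range t
    obtain ⟨s, hs, hrs⟩ := hγper.exists_mem_Ico₀ hL r
    exact ⟨s, Set.Ico_subset_Icc_self hs, hrs.symm.trans hr⟩
  choose σ hσL hσ using hparam
  refine ⟨σ, hσ, fun t U hU => ?_⟩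
  obtain ⟨s, -, hs⟩ := isCompact_Icc.ultrafilter_le_nhds' (U.map σ)
    (Ultrafilter.mem_map.2 (Filter.univ_mem' hσL))
  have hdist : Tendsto (fun u => dist (v u) (γ (σ u))) U (𝓝 (dist (v t) (γ s))) :=
    ((hv.tendsto t).mono_left hU).dist ((hγ.tendsto s).comp hs)
  simp only [fun u => (h.dist_eq_iff u (σ u)).2 (hσ u)] at hdist
  exact ⟨s, (h.dist_eq_iff t s).1 (tendsto_nhds_unique hdist tendsto_const_nhds), hs⟩

lemma continuous_comp {γ v q : ℝ → M} (h : IsFootCurve γ v q δ) (hL : 0 < L)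
    (hγ : Continuous γ) (hγper : Function.Periodic γ L) (hv : Continuous v)
    {X : Type*} [TopologicalSpace X] {f : M → X} (hf : Continuous fun s => f (γ s)) :
    Continuous fun t => f (q t) := by
  obtain ⟨σ, hσ, hlim⟩ := h.exists_parameter hL hγ hγper hv
  refine continuous_iff_ultrafilter.2 fun t U hU => ?_
  obtain ⟨s, hs, hσs⟩ := hlim t U hU
  simpa only [Function.comp_def, hσ, hs] using (hf.tendsto s).comp hσs

lemma hasDerivAt_comp {γ v q : ℝ → E} (h : IsFootCurve γ v q δ) (hL : 0 < L)
    (hγ : Continuous γ) (hγper : Function.Periodic γ L) (hv : Continuous v)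
    {Φ : E → E} {Φ' : E} {f : E → G} {f' : G} {t : ℝ}
    (hvΦ : ∀ u, v u = Φ (q u)) (hv' : HasDerivAt v Φ' t) (hΦ' : Φ' ≠ 0)
    (hΦ : ∀ s, γ s = q t → HasDerivAt (fun r => Φ (γ r)) Φ' s)
    (hf : ∀ s, γ s = q t → HasDerivAt (fun r => f (γ r)) f' s) :
    HasDerivAt (fun u => f (q u)) f' t := by
  obtain ⟨σ, hσ, hlim⟩ := h.exists_parameter hL hγ hγper hv
  refine hasDerivAt_iff_tendsto_slope.2 ((tendsto_iff_ultrafilter _ _ _).2 fun U hU => ?_)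
  obtain ⟨s, hs, hσs⟩ := hlim t U (hU.trans nhdsWithin_le_nhds)
  have hratio : Tendsto (fun u => (σ u - s) / (u - t)) U (𝓝 1) :=
    tendsto_div_sub_of_hasDerivAt hU hσs (hΦ s hs) hΦ' (by rwa [one_smul])
      (by rw [hs, hvΦ]) (fun u => by rw [hσ, hvΦ])
  have hslope : Tendsto (fun u => dslope (fun r => f (γ r)) s (σ u)) U (𝓝 f') := by
    have hcont := (continuousAt_dslope_same.2 (hf s hs).differentiableAt).tendsto
    rw [dslope_same, (hf s hs).deriv] at hcont
    exact hcont.comp hσs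
  refine (one_smul ℝ f' ▸ hratio.smul hslope).congr fun u => ?_
  rw [div_eq_inv_mul, mul_smul, sub_smul_dslope, slope_def_module, hσ, hs]

end IsFootCurve

end FootCurve

section ParallelCurve

variable {γ N : ℝ → ℂ} {k : ℝ → ℝ}

lemma I_mul_normal (hN : ∀ t, N t = -I * deriv γ t) (t : ℝ) : I * N t = deriv γ t := by
  rw [hN]
  linear_combination -deriv γ t * I_mul_I

lemma contDiff_normal {n : WithTop ℕ∞} (hγC : ContDiff ℝ (n + 1) γ)
    (hN : ∀ t, N t = -I * deriv γ t) : ContDiff ℝ n N := by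
  rw [funext hN]
  exact contDiff_const.mul (contDiff_succ_iff_deriv.1 hγC).2.2

lemma isMovingFrame_of_unit_speed (hNd : Differentiable ℝ N) (hγunit : ∀ t, ‖deriv γ t‖ = 1)
    (hN : ∀ t, N t = -I * deriv γ t)
    (hk : ∀ t, deriv N t = k t * deriv γ t) : IsMovingFrame N k where
  norm_eq_one t := by simp [hN, hγunit]
  hasDerivAt t := by
    rw [I_mul_normal hN, real_smul, ← hk]
    exact (hNd t).hasDerivAt

lemma IsMovingFrame.hasDerivAt_parallel_curve (hN : IsMovingFrame N k) {s : ℝ} (δ : ℝ)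
    (hγ : HasDerivAt γ (I * N s) s) :
    HasDerivAt (fun r => γ r - δ • N r) ((1 - δ * k s) • (I * N s)) s :=
  (hγ.sub ((hN.hasDerivAt s).const_smul δ)).congr_deriv (by module)

lemma IsFootCurve.of_parallel {v q : ℝ → ℂ} {ν : ℂ → ℂ} {δ : ℝ} (hδ : 0 ≤ δ)
    (hν : ∀ s, ‖ν (γ s)‖ = 1) (hq : ∀ t, q t ∈ Set.range γ)
    (hq_unique : ∀ t, ∀ y ∈ Set.range γ, dist (v t) y = δ → y = q t)
    (hvq : ∀ t, v t = q t - δ • ν (q t)) : IsFootCurve γ v q δ where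
  mem_range := hq
  dist_eq_iff t s := by
    refine ⟨hq_unique t _ ⟨s, rfl⟩, fun hs => ?_⟩
    rw [hvq, ← hs, dist_eq_norm, sub_sub_cancel_left, norm_neg, norm_smul, hν, mul_one,
      Real.norm_of_nonneg hδ]

lemma IsFootCurve.hasDerivAt_comp_of_parallel {G : Type*} [NormedAddCommGroup G] [NormedSpace ℝ G]
    {v q : ℝ → ℂ} {δ L : ℝ} (h : IsFootCurve γ v q δ) (hL : 0 < L)
    (hγper : Function.Periodic γ L) {ν : ℂ → ℂ} {κ : ℂ → ℝ}
    (hN : IsMovingFrame (fun s => ν (γ s)) (fun s => κ (γ s)))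
    (hγ : ∀ s, HasDerivAt γ (I * ν (γ s)) s) (hm : ∀ t, 1 - δ * κ (q t) ≠ 0)
    (hvq : ∀ t, v t = q t - δ • ν (q t))
    (hv : ∀ t, HasDerivAt v ((1 - δ * κ (q t)) • (I * ν (q t))) t)
    {f f' : ℂ → G} (hf : ∀ s, HasDerivAt (fun r => f (γ r)) (f' (γ s)) s) (t : ℝ) :
    HasDerivAt (fun u => f (q u)) (f' (q t)) t := by
  have hν0 : ν (q t) ≠ 0 := by
    obtain ⟨s, hs⟩ := h.mem_range t
    exact hs ▸ hN.ne_zero s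
  refine h.hasDerivAt_comp hL (continuous_iff_continuousAt.2 fun s => (hγ s).continuousAt) hγper
    (continuous_iff_continuousAt.2 fun s => (hv s).continuousAt) (Φ := fun z => z - δ • ν z) hvq
    (hv t) (smul_ne_zero (hm t) (mul_ne_zero I_ne_zero hν0)) (fun s hs => ?_) fun s hs => hs ▸ hf s
  rw [← hs]
  exact hN.hasDerivAt_parallel_curve δ (hγ s)

end ParallelCurve

theorem derivative_of_solution_branch_general {L : ℝ} (hL : 0 < L) {γ : ℝ → ℂ}
    (hγC : ContDiff ℝ 3 γ) (hγper : Function.Periodic γ L) (hγunit : ∀ t, ‖deriv γ t‖ = 1)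
    {ν : ℂ → ℂ} (hν : ∀ t, ν (γ t) = -I * deriv γ t)
    {κ : ℂ → ℝ} (hκ : ∀ t, deriv (fun s => ν (γ s)) t = κ (γ t) * deriv γ t)
    {κ' : ℂ → ℝ} (hκ' : ∀ t, deriv (fun s => κ (γ s)) t = κ' (γ t))
    {δ : ℝ} (hδ : 0 < δ) (hκδ : ∀ q ∈ Set.range γ, κ q < 1 / δ)
    {p : ℂ → ℂ} {v : ℝ → ℂ} (hp : ∀ t, p (v t) ∈ Set.range γ)
    (hp_unique : ∀ t, ∀ q ∈ Set.range γ, dist (v t) q = δ → q = p (v t))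
    (hvp : ∀ t, v t = p (v t) - δ • ν (p (v t)))
    (hvd : Differentiable ℝ v) (hvper : Function.Periodic v L)
    (hvode : ∀ t, deriv v t = (1 - δ * κ (p (v t))) • (I * ν (p (v t))))
    {w : ℝ → ℂ} (hwd : Differentiable ℝ w) (hwper : Function.Periodic w L)
    (hw : ∀ t, deriv w t
        + (κ (p (v t)) * ipr (I * ν (p (v t))) (w t)) • ν (p (v t))
        + (δ * κ' (p (v t)) / (1 - δ * κ (p (v t))) * ipr (I * ν (p (v t))) (w t))
          • (I * ν (p (v t)))
        - (1 / δ * ipr (ν (p (v t))) (w t)) • (I * ν (p (v t)))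
      = (-(δ / 2) * κ' (p (v t))) • ν (p (v t))
        + (1 / 2 * (1 - δ * κ (p (v t))) * κ (p (v t))) • (I * ν (p (v t))))
    (horth : h1Inner L w (deriv v) = 0) (t : ℝ) :
    w t = (-(δ / 2) * κ (p (v t))) • ν (p (v t)) := by
  have hm (t : ℝ) : 1 - δ * κ (p (v t)) ≠ 0 := by
    linarith [(lt_div_iff₀' hδ).1 (hκδ _ (hp t))]
  have hγ (s : ℝ) : HasDerivAt γ (I * ν (γ s)) s :=
    I_mul_normal hν s ▸ (hγC.differentiable three_ne_zero s).hasDerivAt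
  have hνC : ContDiff ℝ (1 + 1) fun s => ν (γ s) := contDiff_normal (by norm_num; exact hγC) hν
  have hNγ : IsMovingFrame (fun s => ν (γ s)) fun s => κ (γ s) :=
    isMovingFrame_of_unit_speed (hνC.differentiable (by norm_num)) hγunit hν hκ
  have hκC : ContDiff ℝ 1 fun s => κ (γ s) := hNγ.contDiff_curvature hνC
  have hfoot : IsFootCurve γ v (fun t => p (v t)) δ :=
    .of_parallel hδ.le hNγ.norm_eq_one hp hp_unique hvp
  have hchain {G : Type} [NormedAddCommGroup G] [NormedSpace ℝ G] {f f' : ℂ → G} :=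
    hfoot.hasDerivAt_comp_of_parallel (f := f) (f' := f') hL hγper hNγ hγ hm hvp
      fun t => hvode t ▸ (hvd t).hasDerivAt
  have hN : IsMovingFrame (fun t => ν (p (v t))) fun t => κ (p (v t)) :=
    ⟨fun t => (hp t).elim fun s hs => hs ▸ hNγ.norm_eq_one s,
      hchain (f' := fun z => κ z • (I * ν z)) hNγ.hasDerivAt⟩
  have hk : ∀ t, HasDerivAt (fun t => κ (p (v t))) (κ' (p (v t))) t :=
    hchain fun s => hκ' s ▸ (hκC.differentiable one_ne_zero s).hasDerivAt
  have hk' : Continuous fun t => κ' (p (v t)) :=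
    hfoot.continuous_comp hL hγC.continuous hγper hvd.continuous
      (funext hκ' ▸ hκC.continuous_deriv le_rfl)
  have hkper : Function.Periodic (fun t => κ (p (v t))) L := hvper.comp (fun z => κ (p z))
  obtain ⟨β, hβ⟩ := hN.eq_smul_normal_add_smul_velocity hL.ne' hδ.ne' hm hk
    (hvper.comp fun z => ν (p z)) hkper hwper fun t =>
      (hwd t).hasDerivAt.congr_deriv (by linear_combination (norm := module) hw t)
  exact hN.eq_smul_normal_of_h1Inner_eq_zero hL hm hk hk' hkper hβ (funext hvode ▸ horth) t

/-- Derivative of the solution branch at `r = 0`: the unique C¹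
`L`-periodic solution `w` of the inhomogeneous linearized equation
`w' + κ·ν⟨iν,w⟩ + (δκ'/(1-δκ))·iν⟨iν,w⟩ - (1/δ)·iν⟨ν,w⟩
  = -(δ/2)κ'·ν + (1/2)(1-δκ)κ·iν`
(coefficients evaluated at `p(v(t))`) satisfying the `H¹`-orthogonality
`∫₀^L (⟨w,v'⟩ + ⟨w',v''⟩) dt = 0` is `w = -(δ/2)·κ(p(v))·ν(p(v))`. -/
theorem derivative_of_solution_branch
    (L : ℝ) (hL : 0 < L) (γ : ℝ → ℂ)
    (hγC : ContDiff ℝ 3 γ) (hγper : Function.Periodic γ L)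
    (hγunit : ∀ t, ‖deriv γ t‖ = 1) (hγinj : Set.InjOn γ (Set.Ico 0 L))
    (Γset : Set ℂ) (hΓ : Γset = Set.range γ)
    (ν : ℂ → ℂ) (hν : ∀ t, ν (γ t) = -Complex.I * deriv γ t)
    (κ : ℂ → ℝ) (hκ : ∀ t, deriv (fun s => ν (γ s)) t = (κ (γ t) : ℂ) * deriv γ t)
    (κ' : ℂ → ℝ) (hκ' : ∀ t, deriv (fun s => κ (γ s)) t = κ' (γ t))
    (Ω : Set ℂ) (hΩopen : IsOpen Ω) (hΩconn : IsConnected Ω)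
    (hΓfr : Γset ⊆ frontier Ω)
    (hΓcomp : ∀ q ∈ Γset, connectedComponentIn (frontier Ω) q = Γset)
    (d : ℂ → ℝ) (hd : ∀ z, d z = Metric.infDist z Γset)
    (δ : ℝ) (hδ : 0 < δ) (hκδ : ∀ q ∈ Γset, |κ q| < 1/δ)
    (p : ℂ → ℂ)
    (hp : ∀ z ∈ Ω, d z ≤ δ →
      p z ∈ Γset ∧ dist z (p z) = d z ∧ ∀ q ∈ Γset, dist z q = d z → q = p z)
    (hin : ∀ z ∈ Ω, d z ≤ δ → z = p z - (d z : ℝ) • ν (p z))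
    -- the limit solution v at distance δ from Γ
    (v : ℝ → ℂ) (hvC : ContDiff ℝ 1 v) (hvΩ : ∀ t, v t ∈ Ω)
    (hvper : Function.Periodic v L) (hvd : ∀ t, d (v t) = δ)
    (hvode : ∀ t, deriv v t = (1 - δ * κ (p (v t))) • (Complex.I * ν (p (v t))))
    -- the solution w of the inhomogeneous linearized equation
    (w : ℝ → ℂ) (hwC : ContDiff ℝ 1 w) (hwper : Function.Periodic w L)
    (hw : ∀ t,
      deriv w t
        + (κ (p (v t)) * ipr (Complex.I * ν (p (v t))) (w t)) • ν (p (v t))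
        + ((δ * κ' (p (v t)) / (1 - δ * κ (p (v t))))
            * ipr (Complex.I * ν (p (v t))) (w t)) • (Complex.I * ν (p (v t)))
        - ((1/δ) * ipr (ν (p (v t))) (w t)) • (Complex.I * ν (p (v t)))
      = (-(δ/2) * κ' (p (v t))) • ν (p (v t))
        + ((1/2) * (1 - δ * κ (p (v t))) * κ (p (v t))) • (Complex.I * ν (p (v t))))
    -- the orthogonality condition ⟨w, v'⟩_{H¹} = 0 (v is automatically C²)
    (horth : ∫ t in (0:ℝ)..L,
        (ipr (w t) (deriv v t) + ipr (deriv w t) (deriv (deriv v) t)) = 0) :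
    ∀ t, w t = (-(δ/2) * κ (p (v t))) • ν (p (v t)) := by
  subst hΓ
  exact derivative_of_solution_branch_general hL hγC hγper hγunit hν hκ hκ' hδ
    (fun q hq => (abs_lt.1 (hκδ q hq)).2) (fun t => (hp _ (hvΩ t) (hvd t).le).1)
    (fun t => hvd t ▸ (hp _ (hvΩ t) (hvd t).le).2.2) (fun t => hvd t ▸ hin _ (hvΩ t) (hvd t).le)
    (hvC.differentiable one_ne_zero) hvper hvode (hwC.differentiable one_ne_zero) hwper hw horth
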